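/- Suppose c > 0 and 0 < γ < h. Then lim_{α↓0} α^{1−γ/k}·E(α) = (c·k!/F^{(k)}(0))^{1/k}. -/

import Mathlib

open Filter Set Topology MeasureTheory

/-- `J(α) = ∫_0^∞ exp{λ(α) ∫_0^x F̄(α u) du - μ x} dx` for the `M/M/1+GI` queue
with `ρ(α) = 1 + c α^γ`, `λ(α) = ρ(α) μ`, patience CDF `x ↦ F(α x)`. -/
noncomputable def Jq (F : ℝ → ℝ) (μ c γ α : ℝ) : ℝ :=
  ∫ x in Set.Ioi (0 : ℝ),
    Real.exp ((1 + c * α ^ γ) * μ * (∫ u in (0 : ℝ)..x, (1 - F (α * u))) - μ * x)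

/-- `J₁(α) = ∫_0^∞ x exp{λ(α) ∫_0^x F̄(α u) du - μ x} dx`. -/
noncomputable def J1q (F : ℝ → ℝ) (μ c γ α : ℝ) : ℝ :=
  ∫ x in Set.Ioi (0 : ℝ),
    x * Real.exp ((1 + c * α ^ γ) * μ * (∫ u in (0 : ℝ)..x, (1 - F (α * u))) - μ * x)

/-- Exact mean steady-state virtual waiting time `E(α) = λ(α) J₁(α) / (1 + λ(α) J(α))`
in the `M/M/1+GI` model. -/
noncomputable def Emean (F : ℝ → ℝ) (μ c γ α : ℝ) : ℝ :=
  (1 + c * α ^ γ) * μ * J1q F μ c γ α / (1 + (1 + c * α ^ γ) * μ * Jq F μ c γ α)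

/-!
The workload density is proportional to `exp ψ`, where `ψ` is concave because its slope, the net
drift of the queue, decreases. Measured in units of `α ^ (γ / k - 1)`, that slope is
`μ * α ^ (γ + γ / k - 1)` times a function converging to `y ↦ c - a * y ^ k`, where
`a = F⁽ᵏ⁾(0) / k!`. The prefactor blows up since `γ < k / (k + 1)`, so all the mass concentrates at
the zero `(c / a) ^ (1 / k)` of the limit. The concentration bound is one integration by parts: the
derivative of `(x - x₀) * exp (ψ x)` is `exp (ψ x) + (x - x₀) * ψ' x * exp (ψ x)`, and its second
term is at most `-B * |x - x₀| * exp (ψ x)` wherever `|ψ'| ≥ B`.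
-/

section DriftDensity

/-- The unnormalised stationary workload density `x ↦ exp (∫₀ˣ g)` at level `x > 0` of a storage
process whose net drift at level `u` is `g u`. -/
noncomputable def driftDensity (g : ℝ → ℝ) (x : ℝ) : ℝ :=
  Real.exp (∫ u in (0 : ℝ)..x, g u)

/-- The `n`-th moment of `driftDensity g` on the half-line. -/
noncomputable def driftMoment (n : ℕ) (g : ℝ → ℝ) : ℝ :=
  ∫ x in Ioi (0 : ℝ), x ^ n * driftDensity g x

/-- The mean of the probability law proportional to a unit atom at `0` (the empty queue) plus the
density `m * driftDensity g` on the half-line. -/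
noncomputable def stationaryMean (m : ℝ) (g : ℝ → ℝ) : ℝ :=
  m * driftMoment 1 g / (1 + m * driftMoment 0 g)

theorem driftDensity_pos (g : ℝ → ℝ) (x : ℝ) : 0 < driftDensity g x :=
  Real.exp_pos _

theorem driftDensity_zero (g : ℝ → ℝ) : driftDensity g 0 = 1 := by
  simp [driftDensity]

theorem driftMoment_zero (g : ℝ → ℝ) : driftMoment 0 g = ∫ x in Ioi (0 : ℝ), driftDensity g x := by
  simp only [driftMoment, pow_zero, one_mul]

theorem driftDensity_comp_div_div {t : ℝ} (ht : t ≠ 0) (g : ℝ → ℝ) (x : ℝ) :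
    driftDensity (fun y => g (y / t) / t) x = driftDensity g (x / t) := by
  simp only [driftDensity, intervalIntegral.integral_div, intervalIntegral.integral_comp_div g ht,
    zero_div, smul_eq_mul, mul_div_cancel_left₀ _ ht]

theorem antitone_comp_div_div {g : ℝ → ℝ} (hg : Antitone g) {t : ℝ} (ht : 0 ≤ t) :
    Antitone fun y => g (y / t) / t := fun _ _ hxy =>
  div_le_div_of_nonneg_right (hg (div_le_div_of_nonneg_right hxy ht)) ht

theorem driftMoment_comp_div_div {t : ℝ} (ht : 0 < t) (n : ℕ) (g : ℝ → ℝ) :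
    driftMoment n (fun y => g (y / t) / t) = t ^ (n + 1) * driftMoment n g := by
  have hsubst := integral_comp_mul_left_Ioi (fun x => x ^ n * driftDensity g x) 0 (inv_pos.2 ht)
  simp only [inv_inv, mul_zero, smul_eq_mul, ← div_eq_inv_mul] at hsubst
  calc driftMoment n (fun y => g (y / t) / t)
      = ∫ x in Ioi 0, t ^ n * ((x / t) ^ n * driftDensity g (x / t)) := by
        simp only [driftMoment, driftDensity_comp_div_div ht.ne', ← mul_assoc, ← mul_pow,
          mul_div_cancel₀ _ ht.ne']
    _ = t ^ n * (t * driftMoment n g) := by rw [integral_const_mul, hsubst, driftMoment]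
    _ = t ^ (n + 1) * driftMoment n g := by ring

theorem stationaryMean_comp_div_div {t : ℝ} (ht : 0 < t) (m : ℝ) (g : ℝ → ℝ) :
    stationaryMean (m / t) (fun y => g (y / t) / t) = t * stationaryMean m g := by
  simp only [stationaryMean, driftMoment_comp_div_div ht]
  have hmass : m / t * (t ^ (0 + 1) * driftMoment 0 g) = m * driftMoment 0 g := by
    field_simp
    ring
  rw [hmass]
  field_simp

end DriftDensity

section Concentration

variable {g : ℝ → ℝ}

theorem continuous_driftDensity (hg : Antitone g) : Continuous (driftDensity g) :=
  Real.continuous_exp.comp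
    (intervalIntegral.continuous_primitive (fun _ _ => hg.intervalIntegrable) 0)

theorem hasDerivAt_driftDensity (hg : Antitone g) {x : ℝ} (hx : ContinuousAt g x) :
    HasDerivAt (driftDensity g) (g x * driftDensity g x) x := by
  rw [mul_comm]
  exact (intervalIntegral.integral_hasDerivAt_right hg.intervalIntegrable
    hg.measurable.stronglyMeasurable.stronglyMeasurableAtFilter hx).exp

theorem integral_mul_driftDensity_add (hg : Antitone g) (x₀ X : ℝ) :
    ∫ x in (0 : ℝ)..X, ((x - x₀) * g x * driftDensity g x + driftDensity g x) =
      (X - x₀) * driftDensity g X + x₀ := by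
  have hcont := continuous_driftDensity hg
  have hderiv : ∀ x, ContinuousAt g x → HasDerivAt (fun x => (x - x₀) * driftDensity g x)
      ((x - x₀) * g x * driftDensity g x + driftDensity g x) x := fun x hx =>
    (((hasDerivAt_id' x).sub_const x₀).fun_mul (hasDerivAt_driftDensity hg hx)).congr_deriv
      (by ring)
  have hint : IntervalIntegrable
      (fun x => (x - x₀) * g x * driftDensity g x + driftDensity g x) volume 0 X :=
    ((hg.intervalIntegrable.continuousOn_mul (by fun_prop)).mul_continuousOn
      hcont.continuousOn).add (hcont.intervalIntegrable _ _)
  rw [integral_eq_of_hasDerivAt_off_countable _ _ hg.countable_not_continuousAt (by fun_prop)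
    (fun x hx => hderiv x (not_not.1 hx.2)) hint, driftDensity_zero]
  ring

theorem exists_mem_Icc_sub_mul_nonpos (hg : Antitone g) {x₁ x₂ : ℝ} (h₁ : 0 ≤ g x₁)
    (h₂ : g x₂ < 0) : ∃ x₀ ∈ Icc x₁ x₂, ∀ x, (x - x₀) * g x ≤ 0 := by
  have hbound : x₂ ∈ upperBounds {x | 0 ≤ g x} := fun _ hnonneg =>
    le_of_not_gt fun h => (le_trans hnonneg (hg h.le)).not_gt h₂
  refine ⟨sSup {x | 0 ≤ g x}, ⟨le_csSup ⟨x₂, hbound⟩ h₁, csSup_le ⟨x₁, h₁⟩ hbound⟩, fun x => ?_⟩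
  rcases lt_trichotomy x (sSup {x | 0 ≤ g x}) with hlt | heq | hgt
  · obtain ⟨z, hz, hxz⟩ := exists_lt_of_lt_csSup ⟨x₁, h₁⟩ hlt
    exact mul_nonpos_of_nonpos_of_nonneg (sub_nonpos.2 hlt.le) (le_trans hz (hg hxz.le))
  · rw [← heq, sub_self, zero_mul]
  · exact mul_nonpos_of_nonneg_of_nonpos (sub_nonneg.2 hgt.le)
      (not_le.1 fun h => hgt.not_ge (le_csSup ⟨x₂, hbound⟩ h)).le

theorem mul_abs_sub_le_of_antitone (hg : Antitone g) {x₀ x₁ x₂ B : ℝ} (hx₀ : x₀ ∈ Icc x₁ x₂)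
    (hB : 0 ≤ B) (h₁ : B ≤ g x₁) (h₂ : g x₂ ≤ -B) (hsign : ∀ x, (x - x₀) * g x ≤ 0) (x : ℝ) :
    B * |x - x₀| ≤ B * (x₂ - x₁) - (x - x₀) * g x := by
  obtain ⟨hx₁, hx₂⟩ := hx₀
  rcases lt_or_ge x x₁ with hlt | hge
  · have hslope : B ≤ g x := h₁.trans (hg hlt.le)
    rw [abs_of_nonpos (by linarith)]
    nlinarith [mul_nonneg hB (sub_nonneg.2 (hx₁.trans hx₂))]
  rcases lt_or_ge x₂ x with hgt | hle
  · have hslope : g x ≤ -B := (hg hgt.le).trans h₂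
    rw [abs_of_nonneg (by linarith)]
    nlinarith [mul_nonneg hB (sub_nonneg.2 (hx₁.trans hx₂))]
  · have hmid : |x - x₀| ≤ x₂ - x₁ := abs_le.2 ⟨by linarith, by linarith⟩
    linarith [mul_le_mul_of_nonneg_left hmid hB, hsign x]

theorem integral_abs_sub_mul_driftDensity_le (hg : Antitone g) {x₀ B w X : ℝ} (hx₀ : 0 ≤ x₀)
    (hX : x₀ ≤ X) (hpoint : ∀ x, B * |x - x₀| ≤ B * w - (x - x₀) * g x) :
    B * ∫ x in (0 : ℝ)..X, |x - x₀| * driftDensity g x ≤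
      (B * w + 1) * ∫ x in (0 : ℝ)..X, driftDensity g x := by
  have hcont := continuous_driftDensity hg
  have hint : IntervalIntegrable (driftDensity g) volume 0 X := hcont.intervalIntegrable _ _
  have hintg : IntervalIntegrable (fun x => (x - x₀) * g x * driftDensity g x) volume 0 X :=
    (hg.intervalIntegrable.continuousOn_mul (by fun_prop)).mul_continuousOn hcont.continuousOn
  have hparts := integral_mul_driftDensity_add hg x₀ X
  have hboundary : 0 ≤ (X - x₀) * driftDensity g X :=
    mul_nonneg (sub_nonneg.2 hX) (driftDensity_pos g X).le
  calc B * ∫ x in (0 : ℝ)..X, |x - x₀| * driftDensity g x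
      = ∫ x in (0 : ℝ)..X, B * (|x - x₀| * driftDensity g x) :=
        (intervalIntegral.integral_const_mul _ _).symm
    _ ≤ ∫ x in (0 : ℝ)..X, ((B * w + 1) * driftDensity g x -
          ((x - x₀) * g x * driftDensity g x + driftDensity g x)) := by
        refine intervalIntegral.integral_mono_on (hx₀.trans hX)
          (Continuous.intervalIntegrable (by fun_prop) _ _)
          ((hint.const_mul _).sub (hintg.add hint)) fun x _ => ?_
        linarith [mul_le_mul_of_nonneg_right (hpoint x) (driftDensity_pos g x).le]
    _ = (B * w + 1) * (∫ x in (0 : ℝ)..X, driftDensity g x) -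
          ((X - x₀) * driftDensity g X + x₀) := by
        rw [intervalIntegral.integral_sub (hint.const_mul _) (hintg.add hint), hparts,
          intervalIntegral.integral_const_mul]
    _ ≤ (B * w + 1) * ∫ x in (0 : ℝ)..X, driftDensity g x := by linarith

theorem driftDensity_le_mul_exp (hg : Antitone g) (b x : ℝ) :
    driftDensity g x ≤ driftDensity g b * Real.exp (g b * (x - b)) := by
  have hsplit : (∫ u in (0 : ℝ)..x, g u) = (∫ u in (0 : ℝ)..b, g u) + ∫ u in b..x, g u :=
    (intervalIntegral.integral_add_adjacent_intervals hg.intervalIntegrable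
      hg.intervalIntegrable).symm
  have htangent : ∫ u in b..x, g u ≤ g b * (x - b) := by
    rcases le_total b x with hbx | hxb
    · have := intervalIntegral.integral_mono_on hbx (μ := volume) hg.intervalIntegrable
        intervalIntegrable_const (fun u hu => hg hu.1)
      simpa [mul_comm] using this
    · have := intervalIntegral.integral_mono_on hxb (μ := volume) intervalIntegrable_const
        hg.intervalIntegrable (fun u hu => hg hu.2)
      rw [intervalIntegral.integral_symm]
      simp only [intervalIntegral.integral_const, smul_eq_mul] at this
      linarith
  rw [driftDensity, driftDensity, ← Real.exp_add, hsplit]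
  gcongr

theorem integrableOn_pow_mul_driftDensity (hg : Antitone g) {b : ℝ} (hb : g b < 0) (n : ℕ) :
    IntegrableOn (fun x => x ^ n * driftDensity g x) (Ioi 0) := by
  have hexp : IntegrableOn (fun x : ℝ => x ^ n * Real.exp (g b * x)) (Ioi 0) := by
    simpa using integrableOn_rpow_mul_exp_neg_mul_rpow (s := n) (p := 1) (b := -g b)
      (by linarith [n.cast_nonneg (α := ℝ)]) one_pos (neg_pos.2 hb)
  have hcont := continuous_driftDensity hg
  refine Integrable.mono' (hexp.const_mul (driftDensity g b * Real.exp (-(g b * b))))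
    (Continuous.aestronglyMeasurable (by fun_prop)) ?_
  filter_upwards [ae_restrict_mem measurableSet_Ioi] with x hx
  have hxn : 0 ≤ x ^ n := pow_nonneg (le_of_lt hx) n
  rw [Real.norm_of_nonneg (mul_nonneg hxn (driftDensity_pos g x).le)]
  calc x ^ n * driftDensity g x
      ≤ x ^ n * (driftDensity g b * Real.exp (g b * (x - b))) :=
        mul_le_mul_of_nonneg_left (driftDensity_le_mul_exp hg b x) hxn
    _ = driftDensity g b * Real.exp (-(g b * b)) * (x ^ n * Real.exp (g b * x)) := by
        rw [mul_sub, sub_eq_neg_add, Real.exp_add]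
        ring

theorem integrableOn_driftDensity (hg : Antitone g) {b : ℝ} (hb : g b < 0) :
    IntegrableOn (driftDensity g) (Ioi 0) := by
  simpa using integrableOn_pow_mul_driftDensity hg hb 0

theorem le_driftMoment_zero (hg : Antitone g) {x₁ b : ℝ} (hx₁ : 0 ≤ x₁) (h₁ : 0 ≤ g x₁)
    (hb : g b < 0) : x₁ ≤ driftMoment 0 g := by
  have hint := integrableOn_driftDensity hg hb
  have hone : ∀ x ∈ Ioc 0 x₁, 1 ≤ driftDensity g x := fun x hx =>
    Real.one_le_exp (intervalIntegral.integral_nonneg hx.1.le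
      fun u hu => h₁.trans (hg (hu.2.trans hx.2)))
  calc x₁ = ∫ _ in Ioc 0 x₁, (1 : ℝ) := by simp [hx₁]
    _ ≤ ∫ x in Ioc 0 x₁, driftDensity g x :=
      setIntegral_mono_on (by simp) (hint.mono_set Ioc_subset_Ioi_self) measurableSet_Ioc hone
    _ ≤ ∫ x in Ioi 0, driftDensity g x :=
      setIntegral_mono_set hint (ae_of_all _ fun x => (driftDensity_pos g x).le)
        (ae_of_all _ Ioc_subset_Ioi_self)
    _ = driftMoment 0 g := (driftMoment_zero g).symm

theorem integral_Ioi_abs_sub_mul_driftDensity_le (hg : Antitone g) {x₀ b B w : ℝ} (hb : g b < 0)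
    (hx₀ : 0 ≤ x₀) (hpoint : ∀ x, B * |x - x₀| ≤ B * w - (x - x₀) * g x) :
    B * ∫ x in Ioi (0 : ℝ), |x - x₀| * driftDensity g x ≤ (B * w + 1) * driftMoment 0 g := by
  have hint := integrableOn_driftDensity hg hb
  have hint_abs : IntegrableOn (fun x => |x - x₀| * driftDensity g x) (Ioi 0) := by
    refine ((integrableOn_pow_mul_driftDensity hg hb 1).sub (hint.const_mul x₀)).abs.congr
      (ae_of_all _ fun x => ?_)
    simp only [Pi.sub_apply, pow_one, ← sub_mul, abs_mul, abs_of_pos (driftDensity_pos g x)]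
  rw [driftMoment_zero]
  refine le_of_tendsto_of_tendsto
    ((intervalIntegral_tendsto_integral_Ioi 0 hint_abs tendsto_id).const_mul B)
    ((intervalIntegral_tendsto_integral_Ioi 0 hint tendsto_id).const_mul (B * w + 1)) ?_
  filter_upwards [eventually_ge_atTop x₀] with X hX
  exact integral_abs_sub_mul_driftDensity_le hg hx₀ hX hpoint

theorem abs_driftMoment_one_sub_le (hg : Antitone g) {x₁ x₂ m B : ℝ} (hx₁ : 0 ≤ x₁)
    (hm : m ∈ Icc x₁ x₂) (hB : 0 < B) (h₁ : B ≤ g x₁) (h₂ : g x₂ ≤ -B) :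
    |driftMoment 1 g - m * driftMoment 0 g| ≤ (2 * (x₂ - x₁) + 1 / B) * driftMoment 0 g := by
  have hneg : g x₂ < 0 := by linarith
  have hint := integrableOn_driftDensity hg hneg
  have hint₁ : IntegrableOn (fun x => x * driftDensity g x) (Ioi 0) := by
    simpa using integrableOn_pow_mul_driftDensity hg hneg 1
  obtain ⟨x₀, hx₀, hsign⟩ := exists_mem_Icc_sub_mul_nonpos hg (hB.le.trans h₁) hneg
  have hconc : |driftMoment 1 g - x₀ * driftMoment 0 g| ≤
      (x₂ - x₁ + 1 / B) * driftMoment 0 g := by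
    calc |driftMoment 1 g - x₀ * driftMoment 0 g|
        = |∫ x in Ioi (0 : ℝ), (x - x₀) * driftDensity g x| := by
          simp only [driftMoment, pow_one, pow_zero, one_mul, sub_mul]
          rw [integral_sub hint₁ (hint.const_mul x₀), integral_const_mul]
      _ ≤ ∫ x in Ioi (0 : ℝ), |x - x₀| * driftDensity g x := by
          refine abs_integral_le_integral_abs.trans_eq (integral_congr_ae (ae_of_all _ fun x => ?_))
          simp only [abs_mul, abs_of_pos (driftDensity_pos g x)]
      _ ≤ (x₂ - x₁ + 1 / B) * driftMoment 0 g := by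
          have h := integral_Ioi_abs_sub_mul_driftDensity_le hg hneg (hx₁.trans hx₀.1)
            (mul_abs_sub_le_of_antitone hg hx₀ hB.le h₁ h₂ hsign)
          rw [← mul_le_mul_iff_right₀ hB]
          refine h.trans_eq ?_
          field_simp
  have hmass : 0 ≤ driftMoment 0 g :=
    hx₁.trans (le_driftMoment_zero hg hx₁ (hB.le.trans h₁) hneg)
  have hshift : |(x₀ - m) * driftMoment 0 g| ≤ (x₂ - x₁) * driftMoment 0 g := by
    rw [abs_mul, abs_of_nonneg hmass]
    exact mul_le_mul_of_nonneg_right (abs_sub_le_of_le_of_le hx₀.1 hx₀.2 hm.1 hm.2) hmass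
  calc |driftMoment 1 g - m * driftMoment 0 g|
      = |(driftMoment 1 g - x₀ * driftMoment 0 g) + (x₀ - m) * driftMoment 0 g| := by ring_nf
    _ ≤ (x₂ - x₁ + 1 / B) * driftMoment 0 g + (x₂ - x₁) * driftMoment 0 g :=
      (abs_add_le _ _).trans (add_le_add hconc hshift)
    _ = (2 * (x₂ - x₁) + 1 / B) * driftMoment 0 g := by ring

end Concentration

section Limit

variable {ι : Type*} {l : Filter ι} {G : ι → ℝ → ℝ} {p : ℝ}

theorem tendsto_driftMoment_one_div_driftMoment_zero (hp : 0 < p)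
    (hanti : ∀ᶠ i in l, Antitone (G i))
    (hleft : ∀ y, 0 < y → y < p → Tendsto (fun i => G i y) l atTop)
    (hright : ∀ y, p < y → Tendsto (fun i => G i y) l atBot) :
    Tendsto (fun i => driftMoment 1 (G i) / driftMoment 0 (G i)) l (𝓝 p) := by
  rw [Metric.tendsto_nhds]
  intro ε hε
  obtain ⟨δ, hδ, hδp, hδε⟩ : ∃ δ, 0 < δ ∧ δ < p ∧ 8 * δ < ε :=
    ⟨min (p / 2) (ε / 16), by positivity, by linarith [min_le_left (p / 2) (ε / 16)],
      by linarith [min_le_right (p / 2) (ε / 16)]⟩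
  filter_upwards [hanti,
    (hleft (p - δ) (by linarith) (by linarith)).eventually_ge_atTop (2 / ε),
    (hright (p + δ) (by linarith)).eventually_le_atBot (-(2 / ε))] with i hi hge hle
  have hB : 0 < 2 / ε := by positivity
  have hmass : 0 < driftMoment 0 (G i) := (sub_pos.2 hδp).trans_le
    (le_driftMoment_zero hi (sub_pos.2 hδp).le (hB.le.trans hge) (by linarith : G i (p + δ) < 0))
  have hmoment := abs_driftMoment_one_sub_le hi (m := p) (sub_pos.2 hδp).le
    ⟨by linarith, by linarith⟩ hB hge hle
  calc dist (driftMoment 1 (G i) / driftMoment 0 (G i)) p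
      = |driftMoment 1 (G i) - p * driftMoment 0 (G i)| / driftMoment 0 (G i) := by
        rw [Real.dist_eq, div_sub' hmass.ne', abs_div, abs_of_pos hmass, mul_comm p]
    _ ≤ 2 * (p + δ - (p - δ)) + 1 / (2 / ε) := (div_le_iff₀ hmass).2 hmoment
    _ = 4 * δ + ε / 2 := by
        rw [one_div_div]
        ring
    _ < ε := by linarith

theorem tendsto_stationaryMean {M : ι → ℝ} (hp : 0 < p) (hM : Tendsto M l atTop)
    (hanti : ∀ᶠ i in l, Antitone (G i))
    (hleft : ∀ y, 0 < y → y < p → Tendsto (fun i => G i y) l atTop)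
    (hright : ∀ y, p < y → Tendsto (fun i => G i y) l atBot) :
    Tendsto (fun i => stationaryMean (M i) (G i)) l (𝓝 p) := by
  have hmass : ∀ᶠ i in l, p / 2 ≤ driftMoment 0 (G i) := by
    filter_upwards [hanti,
      (hleft (p / 2) (by linarith) (by linarith)).eventually_ge_atTop 0,
      (hright (2 * p) (by linarith)).eventually_lt_atBot 0] with i hi hge hlt
    exact le_driftMoment_zero hi (by linarith) hge hlt
  have hweight : Tendsto (fun i => M i * driftMoment 0 (G i)) l atTop := by
    refine tendsto_atTop_mono' l ?_ (hM.atTop_mul_const (half_pos hp))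
    filter_upwards [hmass, hM.eventually_ge_atTop 0] with i hi hMi
    exact mul_le_mul_of_nonneg_left hi hMi
  have hatom : Tendsto (fun i => (1 : ℝ) / (M i * driftMoment 0 (G i)) + 1) l (𝓝 1) := by
    simpa using (hweight.const_div_atTop 1).add_const 1
  have hquot := (tendsto_driftMoment_one_div_driftMoment_zero hp hanti hleft hright).div hatom
    one_ne_zero
  simp only [div_one, Pi.div_def] at hquot
  refine hquot.congr' ?_
  filter_upwards [hmass, hM.eventually_gt_atTop 0] with i hi hMi
  have hpos : 0 < driftMoment 0 (G i) := (half_pos hp).trans_le hi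
  rw [stationaryMean]
  field_simp

end Limit

theorem tendsto_div_sub_pow_nhdsWithin_sdiff {f : ℝ → ℝ} {s : Set ℝ} {x₀ : ℝ} {k : ℕ}
    (hs : Convex ℝ s) (hx₀ : x₀ ∈ s) (hf : ContDiffOn ℝ k f s)
    (hderivs : ∀ j < k, iteratedDerivWithin j f s x₀ = 0) :
    Tendsto (fun x => f x / (x - x₀) ^ k) (𝓝[s \ {x₀}] x₀)
      (𝓝 (iteratedDerivWithin k f s x₀ / k.factorial)) := by
  have htaylor : ∀ x, taylorWithinEval f k s x₀ x =
      iteratedDerivWithin k f s x₀ / k.factorial * (x - x₀) ^ k := fun x => by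
    rw [taylor_within_apply, Finset.sum_range_succ, Finset.sum_eq_zero
      (fun j hj => by rw [hderivs j (Finset.mem_range.1 hj), smul_zero]), zero_add, smul_eq_mul]
    ring
  have hlim := ((Real.taylor_tendsto hs hx₀ hf).mono_left
    (nhdsWithin_mono x₀ (sdiff_subset (t := {x₀})))).add_const
      (iteratedDerivWithin k f s x₀ / k.factorial)
  rw [zero_add] at hlim
  refine hlim.congr' ?_
  filter_upwards [self_mem_nhdsWithin] with x hx
  have hne : (x - x₀) ^ k ≠ 0 := pow_ne_zero k (sub_ne_zero.2 hx.2)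
  rw [htaylor, sub_div, mul_div_cancel_right₀ _ hne, sub_add_cancel]

theorem tendsto_rpow_nhdsGT_zero {r : ℝ} (hr : 0 < r) :
    Tendsto (fun x : ℝ => x ^ r) (𝓝[>] 0) (𝓝[>] 0) := by
  refine tendsto_nhdsWithin_iff.2 ⟨?_, ?_⟩
  · have hcont := (Real.continuousAt_rpow_const 0 r (Or.inr hr.le)).tendsto
    rw [Real.zero_rpow hr.ne'] at hcont
    exact hcont.mono_left nhdsWithin_le_nhds
  · filter_upwards [self_mem_nhdsWithin] with x hx
    exact Real.rpow_pos_of_pos hx r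

section Queue

/-- The net drift of the `M/M/1+GI` queue at workload `x`, scaled by the service rate: customers
who would wait `x` stay with probability `1 - F (α * x)`. -/
noncomputable def netDrift (F : ℝ → ℝ) (μ c γ α x : ℝ) : ℝ :=
  (1 + c * α ^ γ) * μ * (1 - F (α * x)) - μ

variable {F : ℝ → ℝ} {μ c γ α : ℝ}

theorem antitone_netDrift (hF : Monotone F) (hμ : 0 ≤ μ) (hc : 0 ≤ c) (hα : 0 ≤ α) :
    Antitone (netDrift F μ c γ α) := fun x y hxy => by
  have hFxy : F (α * x) ≤ F (α * y) := hF (mul_le_mul_of_nonneg_left hxy hα)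
  simp only [netDrift]
  gcongr

theorem driftDensity_netDrift (hF : Monotone F) (hα : 0 ≤ α) (x : ℝ) :
    driftDensity (netDrift F μ c γ α) x =
      Real.exp ((1 + c * α ^ γ) * μ * (∫ u in (0 : ℝ)..x, (1 - F (α * u))) - μ * x) := by
  have hint : IntervalIntegrable (fun u => 1 - F (α * u)) volume 0 x :=
    intervalIntegrable_const.sub (hF.comp (monotone_mul_left_of_nonneg hα)).intervalIntegrable
  simp only [driftDensity, netDrift]
  rw [intervalIntegral.integral_sub (hint.const_mul _) intervalIntegrable_const,
    intervalIntegral.integral_const_mul, intervalIntegral.integral_const, smul_eq_mul, sub_zero,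
    mul_comm x]

theorem Emean_eq_stationaryMean (hF : Monotone F) (hα : 0 ≤ α) :
    Emean F μ c γ α = stationaryMean ((1 + c * α ^ γ) * μ) (netDrift F μ c γ α) := by
  simp only [Emean, stationaryMean, J1q, Jq, driftMoment, driftDensity_netDrift hF hα, pow_one,
    pow_zero, one_mul]

theorem netDrift_comp_div_div (hα : 0 < α) (β y : ℝ) :
    netDrift F μ c γ α (y / α ^ (1 - β)) / α ^ (1 - β) =
      μ * α ^ (γ + β - 1) * (c - (1 + c * α ^ γ) * (F (α ^ β * y) / α ^ γ)) := by
  have harg : α * (y / α ^ (1 - β)) = α ^ β * y := by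
    rw [Real.rpow_sub hα, Real.rpow_one]
    field_simp
  have hexp : α ^ (γ + β - 1) = α ^ γ / α ^ (1 - β) := by
    rw [← Real.rpow_sub hα]
    ring_nf
  rw [netDrift, harg, hexp]
  field_simp
  ring

theorem tendsto_one_add_mul_rpow (c : ℝ) (hγ : 0 < γ) :
    Tendsto (fun α : ℝ => 1 + c * α ^ γ) (𝓝[>] 0) (𝓝 1) := by
  simpa using
    (((tendsto_rpow_nhdsGT_zero hγ).mono_right nhdsWithin_le_nhds).const_mul c).const_add 1

theorem tendsto_comp_rpow_mul_div_rpow {k a y : ℝ} (hk : 0 < k) (hγ : 0 < γ) (hy : 0 < y)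
    (hF : Tendsto (fun x => F x / x ^ k) (𝓝[>] 0) (𝓝 a)) :
    Tendsto (fun α : ℝ => F (α ^ (γ / k) * y) / α ^ γ) (𝓝[>] 0) (𝓝 (a * y ^ k)) := by
  have hmul : Tendsto (fun x : ℝ => x * y) (𝓝[>] 0) (𝓝[>] 0) := by
    refine tendsto_nhdsWithin_iff.2 ⟨?_, ?_⟩
    · simpa using ((continuous_mul_const y).tendsto 0).mono_left nhdsWithin_le_nhds
    · filter_upwards [self_mem_nhdsWithin] with x hx
      exact mul_pos hx hy
  refine ((hF.comp (hmul.comp (tendsto_rpow_nhdsGT_zero (div_pos hγ hk)))).mul_const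
    (y ^ k)).congr' ?_
  filter_upwards [self_mem_nhdsWithin] with α hα
  have hpow : (α ^ (γ / k) * y) ^ k = α ^ γ * y ^ k := by
    rw [Real.mul_rpow (Real.rpow_nonneg (le_of_lt hα) _) hy.le, ← Real.rpow_mul (le_of_lt hα),
      div_mul_cancel₀ _ hk.ne']
  simp only [Function.comp_apply, hpow]
  field_simp [(Real.rpow_pos_of_pos hy k).ne']

theorem tendsto_sub_one_add_mul_loss {k a y : ℝ} (c : ℝ) (hk : 0 < k) (hγ : 0 < γ) (hy : 0 < y)
    (hF : Tendsto (fun x => F x / x ^ k) (𝓝[>] 0) (𝓝 a)) :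
    Tendsto (fun α : ℝ => c - (1 + c * α ^ γ) * (F (α ^ (γ / k) * y) / α ^ γ)) (𝓝[>] 0)
      (𝓝 (c - a * y ^ k)) := by
  simpa only [one_mul] using ((tendsto_one_add_mul_rpow c hγ).mul
    (tendsto_comp_rpow_mul_div_rpow hk hγ hy hF)).const_sub c

theorem tendsto_netDrift_comp_div_div_atTop {k a y : ℝ} (hμ : 0 < μ) (hk : 0 < k) (hγ : 0 < γ)
    (hγk : γ + γ / k < 1) (hy : 0 < y) (hF : Tendsto (fun x => F x / x ^ k) (𝓝[>] 0) (𝓝 a))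
    (hyc : a * y ^ k < c) :
    Tendsto (fun α => netDrift F μ c γ α (y / α ^ (1 - γ / k)) / α ^ (1 - γ / k))
      (𝓝[>] 0) atTop := by
  refine (((tendsto_rpow_neg_nhdsGT_zero (sub_neg.2 hγk)).const_mul_atTop hμ).atTop_mul_pos
    (sub_pos.2 hyc) (tendsto_sub_one_add_mul_loss c hk hγ hy hF)).congr' ?_
  filter_upwards [self_mem_nhdsWithin] with α hα
  exact (netDrift_comp_div_div hα _ y).symm

theorem tendsto_netDrift_comp_div_div_atBot {k a y : ℝ} (hμ : 0 < μ) (hk : 0 < k) (hγ : 0 < γ)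
    (hγk : γ + γ / k < 1) (hy : 0 < y) (hF : Tendsto (fun x => F x / x ^ k) (𝓝[>] 0) (𝓝 a))
    (hyc : c < a * y ^ k) :
    Tendsto (fun α => netDrift F μ c γ α (y / α ^ (1 - γ / k)) / α ^ (1 - γ / k))
      (𝓝[>] 0) atBot := by
  refine (((tendsto_rpow_neg_nhdsGT_zero (sub_neg.2 hγk)).const_mul_atTop hμ).atTop_mul_neg
    (sub_neg.2 hyc) (tendsto_sub_one_add_mul_loss c hk hγ hy hF)).congr' ?_
  filter_upwards [self_mem_nhdsWithin] with α hα
  exact (netDrift_comp_div_div hα _ y).symm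

theorem tendsto_arrivalRate_div_rpow_atTop {r : ℝ} (c : ℝ) (hμ : 0 < μ) (hγ : 0 < γ) (hr : 0 < r) :
    Tendsto (fun α : ℝ => (1 + c * α ^ γ) * μ / α ^ r) (𝓝[>] 0) atTop :=
  ((tendsto_one_add_mul_rpow c hγ).mul_const μ).pos_mul_atTop (by simpa using hμ)
    (tendsto_inv_nhdsGT_zero.comp (tendsto_rpow_nhdsGT_zero hr))

end Queue

theorem mm1gi_heavy_traffic_overloaded_general {F : ℝ → ℝ} (hF : Monotone F) {k a : ℝ}
    (hk : 0 < k) (ha : 0 < a) (hF_asymp : Tendsto (fun x => F x / x ^ k) (𝓝[>] 0) (𝓝 a))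
    {μ γ c : ℝ} (hμ : 0 < μ) (hγ : 0 < γ) (hc : 0 < c) (hγk : γ < k / (k + 1)) :
    Tendsto (fun α : ℝ => α ^ (1 - γ / k) * Emean F μ c γ α) (𝓝[>] 0)
      (𝓝 ((c / a) ^ (1 / k))) := by
  have hexp : γ + γ / k < 1 := by
    calc γ + γ / k = γ * (k + 1) / k := by field_simp
      _ < 1 := (div_lt_one hk).2 ((lt_div_iff₀ (by linarith)).1 hγk)
  have hα : ∀ᶠ α : ℝ in 𝓝[>] 0, 0 < α := self_mem_nhdsWithin
  have hca : 0 < c / a := div_pos hc ha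
  have hp : 0 < (c / a) ^ k⁻¹ := Real.rpow_pos_of_pos hca _
  let G : ℝ → ℝ → ℝ := fun α y => netDrift F μ c γ α (y / α ^ (1 - γ / k)) / α ^ (1 - γ / k)
  have hanti : ∀ᶠ α in 𝓝[>] 0, Antitone (G α) := by
    filter_upwards [hα] with α hα
    exact antitone_comp_div_div (antitone_netDrift hF hμ.le hc.le hα.le) (Real.rpow_nonneg hα.le _)
  have hleft : ∀ y, 0 < y → y < (c / a) ^ k⁻¹ → Tendsto (fun α => G α y) (𝓝[>] 0) atTop := by
    intro y hy hyp
    rw [Real.lt_rpow_inv_iff_of_pos hy.le hca.le hk, lt_div_iff₀' ha] at hyp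
    exact tendsto_netDrift_comp_div_div_atTop hμ hk hγ hexp hy hF_asymp hyp
  have hright : ∀ y, (c / a) ^ k⁻¹ < y → Tendsto (fun α => G α y) (𝓝[>] 0) atBot := by
    intro y hyp
    have hy : 0 < y := hp.trans hyp
    rw [Real.rpow_inv_lt_iff_of_pos hca.le hy.le hk, div_lt_iff₀' ha] at hyp
    exact tendsto_netDrift_comp_div_div_atBot hμ hk hγ hexp hy hF_asymp hyp
  have hrate : Tendsto (fun α : ℝ => (1 + c * α ^ γ) * μ / α ^ (1 - γ / k)) (𝓝[>] 0) atTop :=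
    tendsto_arrivalRate_div_rpow_atTop c hμ hγ (by linarith)
  rw [one_div]
  refine (tendsto_stationaryMean hp hrate hanti hleft hright).congr' ?_
  filter_upwards [hα] with α hα
  rw [Emean_eq_stationaryMean hF hα.le, stationaryMean_comp_div_div (Real.rpow_pos_of_pos hα _)]

/-- overloaded heavy-traffic limit for the exact `M/M/1+GI` mean
virtual waiting time: if `c > 0` and `0 < γ < h = k/(k+1)` then
`α^{1-γ/k} E(α) → (c k! / F^{(k)}(0))^{1/k}`. -/
theorem mm1gi_heavy_traffic_overloaded
    (k : ℕ) (hk : 1 ≤ k)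
    (F : ℝ → ℝ)
    (hF_mono : Monotone F)
    (hF_zero : ∀ x ≤ (0 : ℝ), F x = 0)
    (hF_range : ∀ x, 0 ≤ x → 0 ≤ F x ∧ F x < 1)
    (hF_lim : Tendsto F atTop (𝓝 1))
    (hF_smooth : ContDiffOn ℝ k F (Set.Ici 0))
    (hF_derivs : ∀ j < k, iteratedDerivWithin j F (Set.Ici 0) 0 = 0)
    (hF_k : 0 < iteratedDerivWithin k F (Set.Ici 0) 0)
    (μ γ c : ℝ) (hμ : 0 < μ) (hγ : 0 < γ)
    (hc : 0 < c) (hγh : γ < (k : ℝ) / (k + 1))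
    (hJ : ∀ᶠ α in 𝓝[>] (0 : ℝ), IntegrableOn
      (fun x : ℝ => Real.exp ((1 + c * α ^ γ) * μ *
        (∫ u in (0 : ℝ)..x, (1 - F (α * u))) - μ * x)) (Set.Ioi 0))
    (hJ1 : ∀ᶠ α in 𝓝[>] (0 : ℝ), IntegrableOn
      (fun x : ℝ => x * Real.exp ((1 + c * α ^ γ) * μ *
        (∫ u in (0 : ℝ)..x, (1 - F (α * u))) - μ * x)) (Set.Ioi 0)) :
    Tendsto (fun α : ℝ => α ^ (1 - γ / (k : ℝ)) * Emean F μ c γ α)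
      (𝓝[>] (0 : ℝ))
      (𝓝 ((c * (Nat.factorial k) / iteratedDerivWithin k F (Set.Ici 0) 0)
        ^ ((1 : ℝ) / (k : ℝ)))) := by
  have hF_asymp :=
    tendsto_div_sub_pow_nhdsWithin_sdiff (convex_Ici 0) self_mem_Ici hF_smooth hF_derivs
  simp only [Ici_sdiff_left, sub_zero, ← Real.rpow_natCast] at hF_asymp
  simpa only [div_div_eq_mul_div] using mm1gi_heavy_traffic_overloaded_general hF_mono
    (Nat.cast_pos.2 hk) (div_pos hF_k (by positivity)) hF_asymp hμ hγ hc hγh
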